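/- Suppose q = 2^r where r is odd. If e ∈ F_{q^2} satisfies e^{q+1} = 1 and e^{(q+1)/3} ≠ 1, then the polynomial e·X^3 + e^q·X^{3q} + X^{q+1} + 1 has no zeros in F_{q^2}. -/

import Mathlib

/-!
Write `n = x ^ (q + 1)`, `t = e * x ^ 3` and `t' = e ^ q * x ^ (3 * q)`. Since `e ^ (q + 1) = 1`,
we have `t * t' = n ^ 3`, and in characteristic two, where `1 = -3`, a zero `x` of the polynomial
gives `t + t' + 1 = 3 * n`. Cardano's substitution `t = u ^ 3`, `t' = v ^ 3`, `u * v = n` turns the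
latter into `u ^ 3 + v ^ 3 + 1 = 3 * u * v`, which holds when `u + v = -1`. Then
`u ^ 2 + u + n = 0`, so `t = u ^ 3 = (1 - n) * u + n` determines `u` rationally in terms of `t` and
`n` unless `n = 1`, which forces `t = 1`. Hence `t`, and with it `e` (as `x ≠ 0`), is a cube, say
`e = c ^ 3`. Now `e ^ ((q + 1) / 3) = c ^ (q + 1)` has order dividing both `3` and `q - 1`, which
are coprime, so it is `1`.
-/

theorem sub_pow_three_eq_mul_one_sub_pow_three {R : Type*} [CommRing R] {t t' n : R}
    (hmul : t * t' = n ^ 3) (hadd : t + t' + 1 = 3 * n) : (t - n) ^ 3 = t * (1 - n) ^ 3 := by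
  linear_combination (t - 1) * (t * hadd - hmul)

theorem exists_pow_three_eq_of_mul_eq_of_add_eq {K : Type*} [Field K] {t t' n : K}
    (hmul : t * t' = n ^ 3) (hadd : t + t' + 1 = 3 * n) : ∃ u : K, u ^ 3 = t := by
  have key := sub_pow_three_eq_mul_one_sub_pow_three hmul hadd
  rcases eq_or_ne n 1 with rfl | hn
  · have ht : (t - 1) ^ 3 = 0 := by rw [key, sub_self, zero_pow three_ne_zero, mul_zero]
    exact ⟨1, by rw [one_pow, sub_eq_zero.mp (eq_zero_of_pow_eq_zero ht)]⟩
  · have hn' : 1 - n ≠ 0 := sub_ne_zero.mpr hn.symm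
    exact ⟨(t - n) / (1 - n), by rw [div_pow, key, mul_div_cancel_right₀ _ (pow_ne_zero 3 hn')]⟩

theorem exists_pow_three_eq_of_mul_eq_one {K : Type*} [Field K] {e f x y : K} (hef : e * f = 1)
    (h : e * x ^ 3 + f * y ^ 3 - 3 * (x * y) + 1 = 0) : ∃ c : K, c ^ 3 = e := by
  rcases eq_or_ne x 0 with rfl | hx
  · exact ⟨-y, by linear_combination -e * h + y ^ 3 * hef⟩
  · obtain ⟨u, hu⟩ : ∃ u : K, u ^ 3 = e * x ^ 3 :=
      exists_pow_three_eq_of_mul_eq_of_add_eq (t' := f * y ^ 3) (n := x * y)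
        (by linear_combination x ^ 3 * y ^ 3 * hef) (by linear_combination h)
    exact ⟨u / x, by rw [div_pow, hu, mul_div_cancel_right₀ _ (pow_ne_zero 3 hx)]⟩

theorem pow_pow_div_eq_one_of_coprime {M : Type*} [Monoid M] {a b d : ℕ} (hda : d ∣ a)
    (hdb : d.Coprime b) {c : M} (hc : c ^ (a * b) = 1) (hcd : (c ^ d) ^ a = 1) :
    (c ^ d) ^ (a / d) = 1 := by
  have hd : (c ^ a) ^ d = 1 := by rwa [pow_right_comm]
  have hb : (c ^ a) ^ b = 1 := by rwa [← pow_mul]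
  rw [← pow_mul, Nat.mul_div_cancel' hda, ← pow_one (c ^ a), ← hdb.gcd_eq_one]
  exact pow_gcd_eq_one.mpr ⟨hd, hb⟩

theorem pow_three_pow_div_three_eq_one {F : Type*} [Field F] [Fintype F] {q : ℕ}
    (hF : Fintype.card F = q ^ 2) (hq : 3 ∣ q + 1) {c : F} (hc : (c ^ 3) ^ (q + 1) = 1) :
    (c ^ 3) ^ ((q + 1) / 3) = 1 := by
  have hcop : Nat.Coprime 3 (q - 1) :=
    (Nat.Prime.coprime_iff_not_dvd Nat.prime_three).mpr (by omega)
  have hc0 : c ≠ 0 := by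
    rintro rfl
    simp at hc
  have hcard : c ^ ((q + 1) * (q - 1)) = 1 := by
    rw [← Nat.sq_sub_sq, one_pow, ← hF, FiniteField.pow_card_sub_one_eq_one c hc0]
  exact pow_pow_div_eq_one_of_coprime hq hcop hcard hc

theorem no_zeros_poly_q_even_general {F : Type*} [Field F] [Fintype F] {q : ℕ}
    (hF : Fintype.card F = q ^ 2) (hq : 3 ∣ q + 1) {e : F} (he1 : e ^ (q + 1) = 1)
    (he2 : e ^ ((q + 1) / 3) ≠ 1) (x : F) :
    e * x ^ 3 + e ^ q * x ^ (3 * q) - 3 * x ^ (q + 1) + 1 ≠ 0 := by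
  intro hx
  rw [mul_comm 3 q, pow_mul, pow_succ' x q] at hx
  obtain ⟨c, rfl⟩ := exists_pow_three_eq_of_mul_eq_one (by rw [← pow_succ', he1]) hx
  exact he2 (pow_three_pow_div_three_eq_one hF hq he1)

/-- Suppose `q = 2^r` where `r` is odd.  If `e ∈ 𝔽_{q²}` satisfies
`e^(q+1) = 1` and `e^((q+1)/3) ≠ 1`, then the polynomial `e·X³ + e^q·X^(3q) + X^(q+1) + 1`
has no zeros in `𝔽_{q²}`. -/
theorem no_zeros_poly_q_even
    (r q : ℕ) (hr : Odd r) (hq : q = 2 ^ r)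
    (F : Type) [Field F] [Fintype F] (hF : Fintype.card F = q ^ 2)
    (e : F) (he1 : e ^ (q + 1) = 1) (he2 : e ^ ((q + 1) / 3) ≠ 1) :
    ∀ x : F, e * x ^ 3 + e ^ q * x ^ (3 * q) + x ^ (q + 1) + 1 ≠ 0 := by
  have : CharP F 2 := charP_of_card_eq_prime_pow (f := r * 2) (by rw [hF, hq, pow_mul])
  have hq3 : 3 ∣ q + 1 := by simpa only [hq, one_pow] using hr.nat_add_dvd_pow_add_pow 2 1
  exact fun x hx ↦ no_zeros_poly_q_even_general hF hq3 he1 he2 x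
    (by linear_combination hx - 2 * x ^ (q + 1) * CharTwo.two_eq_zero (R := F))
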